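/- If a word w' over Γ is obtained from a word w over Γ by finitely many one-step reductions (i.e., (w, w') lies in the reflexive-transitive closure of the one-step reduction relation), then for every state (p, d) ∈ ℂ × ℂ the turtle runs of w and w' from (p, d) have the same final position and the same final direction. -/

import Mathlib

/-!
Traversing `X v Y` from `(p, d)`, the `v` step retraces the `X` step, so the position is back at `p`
with direction `-ρ(X) d`; the step `Y` then leads to `(p + e, e)` with `e = -ρ(X) ρ(Y) d`. A single
letter `Z` leads to `(p + ρ(Z) d, ρ(Z) d)`, so the factor may be replaced by `Z` as soon as
`ρ(Z) = -ρ(X) ρ(Y)`, which holds for `Z = Red X Y` by `rho_Red`. The run of a concatenation is the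
composition of the runs, so the replacement is harmless inside any word, and the claim follows by
induction on the number of reductions.
-/

open Complex

/-- The boundary alphabet Γ = {L, R, s, v}. -/
inductive GammaLetter : Type
  | L | R | s | v
deriving DecidableEq

/-- The turn factor: ρ(L) = i, ρ(R) = -i, ρ(s) = 1, ρ(v) = -1. -/
noncomputable def rho : GammaLetter → ℂ
  | .L => I
  | .R => -I
  | .s => 1
  | .v => -1

/-- One turtle step: the letter x updates (p, d) by first d ↦ ρ(x)·d and then p ↦ p + d. -/
noncomputable def turtleStep (x : GammaLetter) (st : ℂ × ℂ) : ℂ × ℂ :=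
  (st.1 + rho x * st.2, rho x * st.2)

/-- The turtle run of a word from a state, processing letters left to right. -/
noncomputable def run (w : List GammaLetter) (st : ℂ × ℂ) : ℂ × ℂ :=
  w.foldl (fun st x => turtleStep x st) st

/-- The reduction table: RvR ↦ s, LvL ↦ s, RvL ↦ v, LvR ↦ v, svR ↦ L, svL ↦ R,
Rvs ↦ L, Lvs ↦ R, svs ↦ v.  (`Red X Y` is the value on the triple X v Y.) -/
def Red : GammaLetter → GammaLetter → GammaLetter
  | .R, .R => .s
  | .L, .L => .s
  | .R, .L => .v
  | .L, .R => .v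
  | .s, .R => .L
  | .s, .L => .R
  | .R, .s => .L
  | .L, .s => .R
  | .s, .s => .v
  | _, _ => .v

/-- One-step reduction: replace a factor X v Y (X, Y ∈ {L, R, s}) by Red(XvY). -/
def StepRed (w w' : List GammaLetter) : Prop :=
  ∃ (u t : List GammaLetter) (X Y : GammaLetter),
    (X = GammaLetter.L ∨ X = GammaLetter.R ∨ X = GammaLetter.s) ∧
    (Y = GammaLetter.L ∨ Y = GammaLetter.R ∨ Y = GammaLetter.s) ∧
    w = u ++ [X, GammaLetter.v, Y] ++ t ∧
    w' = u ++ [Red X Y] ++ t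

theorem rho_Red {X Y : GammaLetter}
    (hX : X = GammaLetter.L ∨ X = GammaLetter.R ∨ X = GammaLetter.s)
    (hY : Y = GammaLetter.L ∨ Y = GammaLetter.R ∨ Y = GammaLetter.s) :
    rho (Red X Y) = -(rho X * rho Y) := by
  rcases hX with rfl | rfl | rfl <;> rcases hY with rfl | rfl | rfl <;> simp [Red, rho]

theorem run_append (u t : List GammaLetter) (st : ℂ × ℂ) :
    run (u ++ t) st = run t (run u st) :=
  List.foldl_append

theorem run_factor {X Y : GammaLetter}
    (hX : X = GammaLetter.L ∨ X = GammaLetter.R ∨ X = GammaLetter.s)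
    (hY : Y = GammaLetter.L ∨ Y = GammaLetter.R ∨ Y = GammaLetter.s) (st : ℂ × ℂ) :
    run [X, GammaLetter.v, Y] st = run [Red X Y] st := by
  have hv : rho GammaLetter.v = -1 := rfl
  simp only [run, List.foldl_cons, List.foldl_nil, turtleStep, rho_Red hX hY, hv]
  ext1 <;> ring

theorem run_eq_of_stepRed {w w' : List GammaLetter} (h : StepRed w w') (st : ℂ × ℂ) :
    run w st = run w' st := by
  obtain ⟨u, t, X, Y, hX, hY, rfl, rfl⟩ := h
  simp only [run_append, run_factor hX hY]

/-- Finitely many one-step reductions preserve the final position and final direction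
of the turtle run from any state. -/
theorem run_eq_of_stepRed_rtg (w w' : List GammaLetter)
    (h : Relation.ReflTransGen StepRed w w') (p d : ℂ) :
    run w (p, d) = run w' (p, d) := by
  induction h with
  | refl => rfl
  | tail _ hstep ih => exact ih.trans (run_eq_of_stepRed hstep (p, d))
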